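/- Let K be an algebraically closed field of characteristic zero and let b₁, b₃ ≥ 1 be integers. Consider the derivations of the polynomial ring K[x₁,x₂,x₃,x₄] given by ∂₁ = x₃^{b₁}·∂/∂x₁ − x₃^{b₁−1}·(2x₁x₂⁴ + 1)·∂/∂x₄ and ∂₃ = x₃^{b₃}·∂/∂x₂ − 4x₁²x₂³x₃^{b₃−1}·∂/∂x₄. Then: (i) ∂₁ and ∂₃ are locally nilpotent; (ii) ∂₁(f) = ∂₃(f) = 0 for f = x₁ + x₁²x₂⁴ + x₃x₄, so both derivations preserve the principal ideal (x₁ + x₁²x₂⁴ + x₃x₄) and descend to derivations of the quotient ring R = K[x₁,x₂,x₃,x₄]/(x₁ + x₁²x₂⁴ + x₃x₄); (iii) ∂₁ and ∂₃ commute: ∂₁∘∂₃ = ∂₃∘∂₁ on K[x₁,x₂,x₃,x₄]. -/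

import Mathlib

/- STATEMENT 14: for integers `b₁, b₃ ≥ 1`, the derivations
`∂₁ = x₃^{b₁}·∂/∂x₁ − x₃^{b₁−1}·(2x₁x₂⁴+1)·∂/∂x₄` and
`∂₃ = x₃^{b₃}·∂/∂x₂ − 4x₁²x₂³x₃^{b₃−1}·∂/∂x₄` of `K[x₁,x₂,x₃,x₄]`
(i) are locally nilpotent, (ii) kill `f = x₁ + x₁²x₂⁴ + x₃x₄` and preserve
the principal ideal `(f)`, and (iii) commute. Here `xᵢ = X (i−1)` in
`MvPolynomial (Fin 4) K`. -/

noncomputable section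
open MvPolynomial

/-- `∂₁ = x₃^{b₁}·∂/∂x₁ − x₃^{b₁−1}·(2x₁x₂⁴ + 1)·∂/∂x₄`. -/
def del1 (K : Type*) [Field K] (b₁ : ℕ) :
    Derivation K (MvPolynomial (Fin 4) K) (MvPolynomial (Fin 4) K) :=
  ((X 2 ^ b₁ : MvPolynomial (Fin 4) K)) • pderiv (R := K) (0 : Fin 4)
    - ((X 2 ^ (b₁ - 1) * (2 * X 0 * X 1 ^ 4 + 1) : MvPolynomial (Fin 4) K))
        • pderiv (R := K) (3 : Fin 4)

/-- `∂₃ = x₃^{b₃}·∂/∂x₂ − 4x₁²x₂³x₃^{b₃−1}·∂/∂x₄`. -/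
def del3 (K : Type*) [Field K] (b₃ : ℕ) :
    Derivation K (MvPolynomial (Fin 4) K) (MvPolynomial (Fin 4) K) :=
  ((X 2 ^ b₃ : MvPolynomial (Fin 4) K)) • pderiv (R := K) (1 : Fin 4)
    - ((4 * X 0 ^ 2 * X 1 ^ 3 * X 2 ^ (b₃ - 1) : MvPolynomial (Fin 4) K))
        • pderiv (R := K) (3 : Fin 4)

/-! Put `fᵢ = ∂f/∂xᵢ`. Then `∂₁` and `∂₃` are `x₃^(b - 1)` times the Hamiltonian vector fields
`f₄ ∂/∂xᵢ - fᵢ ∂/∂x₄` for `i = 1, 2`, which visibly kill `f`. As `f₄ = x₃` is killed by `∂/∂x₁`,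
`∂/∂x₂` and `∂/∂x₄`, each of these fields commutes with `∂/∂x₄` and restricts to `f₄ ∂/∂xᵢ` on the
kernel of `∂/∂x₄`. Since `f₄ ∂/∂xᵢ` and `∂/∂x₄` are locally nilpotent, so is the field: induct on
the number of applications of `∂/∂x₄` that annihilate a given polynomial. -/

section LocallyNilpotent

/-- Local nilpotency of a self-map: every element is sent to `0` by some positive iterate. For a
derivation `D` this is applied to the underlying map `⇑D`. -/
def IsLocallyNilpotent {M : Type*} [Zero M] (D : M → M) : Prop :=
  ∀ m, ∃ N : ℕ, 0 < N ∧ D^[N] m = 0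

variable {M : Type*} [Zero M] {D D' E : M → M}

theorem IsLocallyNilpotent.comp_of_commute (hD : IsLocallyNilpotent D)
    (hE : E 0 = 0) (h : Function.Commute E D) : IsLocallyNilpotent (E ∘ D) := by
  intro m
  obtain ⟨N, hN, hm⟩ := hD m
  refine ⟨N, hN, ?_⟩
  rw [h.comp_iterate, Function.comp_apply, hm, Function.iterate_fixed hE]

theorem IsLocallyNilpotent.exists_iterate_eq_zero_of_eqOn_ker (hD' : IsLocallyNilpotent D')
    (hD : D 0 = 0) (h : Function.Commute D E) (h_eq : ∀ m, E m = 0 → D m = D' m)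
    {m : M} (hm : E m = 0) : ∃ N : ℕ, 0 < N ∧ D^[N] m = 0 := by
  have hmem (n : ℕ) : E (D^[n] m) = 0 := by
    rw [← h.iterate_left n m, hm, Function.iterate_fixed hD]
  have hiter (n : ℕ) : D^[n] m = D'^[n] m := by
    induction n with
    | zero => rfl
    | succ n ih =>
      rw [Function.iterate_succ_apply', Function.iterate_succ_apply', h_eq _ (hmem n), ih]
  simpa only [hiter] using hD' m

theorem IsLocallyNilpotent.of_commute_of_forall_ker (hE : IsLocallyNilpotent E)
    (h : Function.Commute D E) (hker : ∀ m, E m = 0 → ∃ N : ℕ, 0 < N ∧ D^[N] m = 0) :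
    IsLocallyNilpotent D := by
  intro m
  obtain ⟨n, hn, hm⟩ := hE m
  induction n, hn using Nat.le_induction generalizing m with
  | base => exact hker m hm
  | succ n _ ih =>
    obtain ⟨N, -, hN⟩ := ih (E m) hm
    obtain ⟨N', hN', hm'⟩ := hker (D^[N] m) (by rw [← h.iterate_left N m, hN])
    exact ⟨N' + N, Nat.add_pos_left hN' N, by rw [Function.iterate_add_apply, hm']⟩

end LocallyNilpotent

section Derivation

variable {R A : Type*} [CommSemiring R] [CommSemiring A] [Algebra R A]
  {D D₁ D₂ : Derivation R A A}

theorem derivation_mem_ideal_span {s : Set A} (hs : ∀ x ∈ s, D x ∈ Ideal.span s) {g : A}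
    (hg : g ∈ Ideal.span s) : D g ∈ Ideal.span s := by
  induction hg using Submodule.span_induction with
  | mem x hx => exact hs x hx
  | zero => simp only [map_zero, zero_mem]
  | add x y _ _ hx hy => simpa only [map_add] using add_mem hx hy
  | smul a x hxs hx =>
    rw [smul_eq_mul, D.leibniz]
    exact add_mem (Ideal.mul_mem_left _ a hx) (Ideal.mul_mem_right _ _ hxs)

theorem derivation_mem_ideal_span_singleton {f : A} (hf : D f = 0) :
    ∀ g ∈ Ideal.span {f}, D g ∈ Ideal.span {f} :=
  fun _ ↦ derivation_mem_ideal_span (by simp [hf])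

theorem derivation_pow_eq_zero {a : A} (ha : D a = 0) (n : ℕ) : D (a ^ n) = 0 := by
  rw [D.leibniz_pow, ha, smul_zero, smul_zero]

theorem IsLocallyNilpotent.smul_derivation (hD : IsLocallyNilpotent D) {a : A} (ha : D a = 0) :
    IsLocallyNilpotent ⇑(a • D) :=
  hD.comp_of_commute (E := (a * ·)) (mul_zero a) fun g ↦ by simp [ha]

theorem commute_smul_derivation (h : Function.Commute D₁ D₂) {a₁ a₂ : A} (h₁₂ : D₁ a₂ = 0)
    (h₂₁ : D₂ a₁ = 0) : Function.Commute ⇑(a₁ • D₁) ⇑(a₂ • D₂) := by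
  intro g
  simp only [Derivation.smul_apply, Derivation.leibniz, smul_eq_mul, h₁₂, h₂₁, mul_zero, add_zero,
    h.eq g]
  ring

end Derivation

section Hamiltonian

variable {R A : Type*} [CommRing R] [CommRing A] [Algebra R A]

/-- The Hamiltonian vector field `ε(f) δ - δ(f) ε` of `f`, that is, the derivation `{f, ·}` for the
bracket `{f, g} = ε(f) δ(g) - δ(f) ε(g)`. -/
def hamiltonian (δ ε : Derivation R A A) (f : A) : Derivation R A A :=
  ε f • δ - δ f • ε

variable {δ δ₁ δ₂ ε : Derivation R A A} {f : A}

theorem hamiltonian_apply (g : A) : hamiltonian δ ε f g = ε f * δ g - δ f * ε g :=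
  rfl

theorem hamiltonian_apply_self : hamiltonian δ ε f f = 0 := by
  rw [hamiltonian_apply, mul_comm, sub_self]

theorem hamiltonian_apply_eq_zero {g : A} (hδ : δ g = 0) (hε : ε g = 0) :
    hamiltonian δ ε f g = 0 := by
  rw [hamiltonian_apply, hδ, hε, mul_zero, mul_zero, sub_zero]

theorem commute_hamiltonian_right (h : Function.Commute δ ε) (hδ : δ (ε f) = 0)
    (hε : ε (ε f) = 0) : Function.Commute (hamiltonian δ ε f) ε := by
  intro g
  have hεδ : ε (δ f) = 0 := by rw [← h.eq f, hδ]
  simp only [hamiltonian_apply, map_sub, Derivation.leibniz, smul_eq_mul, h.eq g, hε, hεδ]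
  ring

theorem isLocallyNilpotent_hamiltonian (h : Function.Commute δ ε) (hδ : IsLocallyNilpotent δ)
    (hε : IsLocallyNilpotent ε) (hδf : δ (ε f) = 0) (hεf : ε (ε f) = 0) :
    IsLocallyNilpotent (hamiltonian δ ε f) := by
  have hcomm := commute_hamiltonian_right h hδf hεf
  have h_eq (g : A) (hg : ε g = 0) : hamiltonian δ ε f g = (ε f • δ) g := by
    rw [hamiltonian_apply, hg, mul_zero, sub_zero, Derivation.smul_apply, smul_eq_mul]
  exact hε.of_commute_of_forall_ker hcomm fun _ ↦
    (hδ.smul_derivation hδf).exists_iterate_eq_zero_of_eqOn_ker (map_zero _) hcomm h_eq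

theorem commute_hamiltonian (h₁₂ : Function.Commute δ₁ δ₂) (h₁ : Function.Commute δ₁ ε)
    (h₂ : Function.Commute δ₂ ε) (hδ₁ : δ₁ (ε f) = 0) (hδ₂ : δ₂ (ε f) = 0) (hε : ε (ε f) = 0) :
    Function.Commute (hamiltonian δ₁ ε f) (hamiltonian δ₂ ε f) := by
  intro g
  have hεδ₁ : ε (δ₁ f) = 0 := by rw [← h₁.eq f, hδ₁]
  have hεδ₂ : ε (δ₂ f) = 0 := by rw [← h₂.eq f, hδ₂]
  simp only [hamiltonian_apply, map_sub, Derivation.leibniz, smul_eq_mul, hδ₁, hδ₂, hε, hεδ₁,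
    hεδ₂, h₁₂.eq, h₁.eq, h₂.eq]
  ring

end Hamiltonian

section PartialDerivatives

variable {σ R : Type*}

theorem commute_pderiv [CommRing R] (i j : σ) :
    Function.Commute (pderiv (R := R) i) (pderiv (R := R) j) := by
  classical
  have hbracket : ⁅pderiv (R := R) i, pderiv (R := R) j⁆ = 0 :=
    derivation_ext fun k ↦ by
      simp only [Derivation.commutator_apply, pderiv_X, Pi.single_apply, apply_ite, pderiv_one,
        map_zero, ite_self, sub_self, Derivation.zero_apply]
  intro g
  rw [← sub_eq_zero, ← Derivation.commutator_apply, hbracket, Derivation.zero_apply]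

theorem iterate_pderiv_monomial_eq_zero [CommSemiring R] {i : σ} {n : ℕ} {s : σ →₀ ℕ}
    (hs : s i < n) (a : R) : (pderiv i)^[n] (monomial s a) = 0 := by
  induction n generalizing s a with
  | zero => exact absurd hs (Nat.not_lt_zero _)
  | succ n ih =>
    rw [Function.iterate_succ_apply, pderiv_monomial]
    rcases Nat.eq_zero_or_pos (s i) with h_zero | h_pos
    · rw [h_zero, Nat.cast_zero, mul_zero, monomial_zero, iterate_map_zero]
    · refine ih ?_ _
      rw [Finsupp.tsub_apply, Finsupp.single_eq_same]
      lia

theorem iterate_pderiv_eq_zero_of_degreeOf_lt [CommSemiring R] {i : σ} {n : ℕ}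
    {p : MvPolynomial σ R} (hp : degreeOf i p < n) : (pderiv i)^[n] p = 0 := by
  rw [p.as_sum, ← Derivation.coeFn_coe, ← Module.End.coe_pow, map_sum]
  refine Finset.sum_eq_zero fun s hs ↦ ?_
  rw [Module.End.coe_pow]
  exact iterate_pderiv_monomial_eq_zero ((monomial_le_degreeOf i hs).trans_lt hp) _

theorem isLocallyNilpotent_pderiv [CommSemiring R] (i : σ) :
    IsLocallyNilpotent (pderiv (R := R) i) :=
  fun _ ↦ ⟨_, Nat.succ_pos _, iterate_pderiv_eq_zero_of_degreeOf_lt (Nat.lt_succ_self _)⟩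

end PartialDerivatives

theorem del1_del3_lnd_commute_preserve_general {σ R : Type*} [CommRing R]
    {f : MvPolynomial σ R} {i j l : σ} (hi : pderiv i (pderiv l f) = 0)
    (hj : pderiv j (pderiv l f) = 0) (hl : pderiv l (pderiv l f) = 0) (m n : ℕ) :
    let D₁ := pderiv l f ^ m • hamiltonian (pderiv i) (pderiv l) f
    let D₂ := pderiv l f ^ n • hamiltonian (pderiv j) (pderiv l) f
    IsLocallyNilpotent D₁ ∧ IsLocallyNilpotent D₂ ∧ D₁ f = 0 ∧ D₂ f = 0
    ∧ (∀ g ∈ Ideal.span {f}, D₁ g ∈ Ideal.span {f})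
    ∧ (∀ g ∈ Ideal.span {f}, D₂ g ∈ Ideal.span {f})
    ∧ Function.Commute D₁ D₂ := by
  intro D₁ D₂
  have hpow {k : σ} (hk : pderiv k (pderiv l f) = 0) (r : ℕ) :
      hamiltonian (pderiv k) (pderiv l) f (pderiv l f ^ r) = 0 :=
    derivation_pow_eq_zero (hamiltonian_apply_eq_zero hk hl) r
  have hnil {k : σ} (hk : pderiv k (pderiv l f) = 0) (r : ℕ) :
      IsLocallyNilpotent ⇑(pderiv l f ^ r • hamiltonian (pderiv k) (pderiv l) f) :=
    (isLocallyNilpotent_hamiltonian (commute_pderiv k l) (isLocallyNilpotent_pderiv k)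
      (isLocallyNilpotent_pderiv l) hk hl).smul_derivation (hpow hk r)
  have hf (k : σ) (r : ℕ) : (pderiv l f ^ r • hamiltonian (pderiv k) (pderiv l) f) f = 0 := by
    rw [Derivation.smul_apply, hamiltonian_apply_self, smul_zero]
  have hcomm := commute_hamiltonian (commute_pderiv i j) (commute_pderiv i l) (commute_pderiv j l)
    hi hj hl
  exact ⟨hnil hi m, hnil hj n, hf i m, hf j n, derivation_mem_ideal_span_singleton (hf i m),
    derivation_mem_ideal_span_singleton (hf j n),
    commute_smul_derivation hcomm (hpow hi n) (hpow hj m)⟩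

section Trinomial

/-- The equation `f = x₁ + x₁²x₂⁴ + x₃x₄` of the trinomial hypersurface, with `xᵢ = X (i - 1)`. -/
def trinomial (K : Type*) [CommSemiring K] : MvPolynomial (Fin 4) K :=
  X 0 + X 0 ^ 2 * X 1 ^ 4 + X 2 * X 3

theorem pderiv_zero_trinomial (K : Type*) [CommSemiring K] :
    pderiv 0 (trinomial K) = 2 * X 0 * X 1 ^ 4 + 1 := by
  simp only [trinomial, map_add, pderiv_X, Pi.single_eq_same, ne_eq, Fin.reduceEq,
    not_false_eq_true, Pi.single_eq_of_ne, Derivation.leibniz, Derivation.leibniz_pow, smul_eq_mul,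
    nsmul_eq_mul, mul_zero, Nat.cast_ofNat]
  ring

theorem pderiv_one_trinomial (K : Type*) [CommSemiring K] :
    pderiv 1 (trinomial K) = 4 * X 0 ^ 2 * X 1 ^ 3 := by
  simp only [trinomial, map_add, pderiv_X, Pi.single_eq_same, ne_eq, Fin.reduceEq,
    not_false_eq_true, Pi.single_eq_of_ne, Derivation.leibniz, Derivation.leibniz_pow, smul_eq_mul,
    nsmul_eq_mul, mul_zero, Nat.cast_ofNat]
  ring

theorem pderiv_three_trinomial (K : Type*) [CommSemiring K] :
    pderiv 3 (trinomial K) = X 2 := by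
  simp [trinomial, pderiv_X, Derivation.leibniz, Derivation.leibniz_pow]

theorem pderiv_pderiv_three_trinomial (K : Type*) [CommSemiring K] {i : Fin 4} (hi : 2 ≠ i) :
    pderiv i (pderiv 3 (trinomial K)) = 0 := by
  rw [pderiv_three_trinomial, pderiv_X_of_ne hi]

variable (K : Type*) [Field K] {b : ℕ}

theorem del1_eq_smul_hamiltonian (hb : 1 ≤ b) :
    del1 K b = pderiv 3 (trinomial K) ^ (b - 1) •
      hamiltonian (pderiv 0) (pderiv 3) (trinomial K) := by
  rw [del1, hamiltonian, pderiv_zero_trinomial, pderiv_three_trinomial, smul_sub, smul_smul,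
    smul_smul, ← pow_succ, Nat.sub_add_cancel hb]

theorem del3_eq_smul_hamiltonian (hb : 1 ≤ b) :
    del3 K b = pderiv 3 (trinomial K) ^ (b - 1) •
      hamiltonian (pderiv 1) (pderiv 3) (trinomial K) := by
  rw [del3, hamiltonian, pderiv_one_trinomial, pderiv_three_trinomial, smul_sub, smul_smul,
    smul_smul, ← pow_succ, Nat.sub_add_cancel hb, mul_comm (X 2 ^ (b - 1))]

end Trinomial

theorem del1_del3_lnd_commute_preserve
    {K : Type*} [Field K] [IsAlgClosed K] [CharZero K]
    (b₁ b₃ : ℕ) (hb₁ : 1 ≤ b₁) (hb₃ : 1 ≤ b₃) :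
    -- (i) local nilpotency
    (∀ g : MvPolynomial (Fin 4) K, ∃ N : ℕ, 0 < N ∧ (⇑(del1 K b₁))^[N] g = 0)
    ∧ (∀ g : MvPolynomial (Fin 4) K, ∃ N : ℕ, 0 < N ∧ (⇑(del3 K b₃))^[N] g = 0)
    -- (ii) both kill f = x₁ + x₁²x₂⁴ + x₃x₄ and preserve the ideal (f)
    ∧ del1 K b₁ (X 0 + X 0 ^ 2 * X 1 ^ 4 + X 2 * X 3) = 0
    ∧ del3 K b₃ (X 0 + X 0 ^ 2 * X 1 ^ 4 + X 2 * X 3) = 0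
    ∧ (∀ g ∈ Ideal.span {(X 0 + X 0 ^ 2 * X 1 ^ 4 + X 2 * X 3 : MvPolynomial (Fin 4) K)},
        del1 K b₁ g ∈ Ideal.span {(X 0 + X 0 ^ 2 * X 1 ^ 4 + X 2 * X 3 : MvPolynomial (Fin 4) K)})
    ∧ (∀ g ∈ Ideal.span {(X 0 + X 0 ^ 2 * X 1 ^ 4 + X 2 * X 3 : MvPolynomial (Fin 4) K)},
        del3 K b₃ g ∈ Ideal.span {(X 0 + X 0 ^ 2 * X 1 ^ 4 + X 2 * X 3 : MvPolynomial (Fin 4) K)})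
    -- (iii) they commute
    ∧ (∀ g : MvPolynomial (Fin 4) K,
        del1 K b₁ (del3 K b₃ g) = del3 K b₃ (del1 K b₁ g)) := by
  rw [del1_eq_smul_hamiltonian K hb₁, del3_eq_smul_hamiltonian K hb₃]
  exact del1_del3_lnd_commute_preserve_general (pderiv_pderiv_three_trinomial K (by decide))
    (pderiv_pderiv_three_trinomial K (by decide)) (pderiv_pderiv_three_trinomial K (by decide)) _ _
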